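/- (Titchmarsh theorem for powers of a distribution on a circle, continuous-function version.) Let n ≥ 1, p ≥ 1, and let f : 𝕋 → ℂ be a continuous function on 𝕋 = AddCircle (2π). Let a ≤ b be real numbers with b − a < 2π/(pn), and set I = π_*([a, b]). Assume supp f ⊆ R_n(I) and that there is no strictly smaller closed subinterval I' = π_*([a', b']) (with a ≤ a', b' ≤ b, and (a', b') ≠ (a, b)) satisfying supp f ⊆ R_n(I'). Then supp (f^{⋆p}) ⊆ R_n(π_*([p·a, p·b])), and for all reals a', b' with p·a ≤ a', b' ≤ p·b and (a', b') ≠ (p·a, p·b), one has supp (f^{⋆p}) ⊄ R_n(π_*([a', b'])); that is, the smallest closed subinterval K of π_*([p·a, p·b]) with supp (f^{⋆p}) ⊆ R_n(K) is π_*([p·a, p·b]) itself. -/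

import Mathlib

open MeasureTheory Real Set Pointwise

noncomputable section

abbrev 𝕋 : Type := AddCircle (2 * π)

instance : Fact (0 < 2 * π) := ⟨by positivity⟩

/-- Natural projection `ℝ → 𝕋`. -/
def proj : ℝ → 𝕋 := fun r => (r : 𝕋)

/-- Convolution of functions on the circle with respect to Haar (Lebesgue) measure. -/
def circConv (f g : 𝕋 → ℂ) : 𝕋 → ℂ := fun x => ∫ t : 𝕋, f t * g (x - t)

/-- `circConvPow f k` is the `(k+1)`-fold convolution `f ⋆ f ⋆ ⋯ ⋆ f`. -/
def circConvPow (f : 𝕋 → ℂ) : ℕ → (𝕋 → ℂ)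
  | 0 => f
  | k + 1 => circConv (circConvPow f k) f

/-- `Rn n A = ⋃_{k=0}^{n-1} (π_*(2πk/n) + A)`. -/
def Rn (n : ℕ) (A : Set 𝕋) : Set 𝕋 :=
  ⋃ k ∈ Finset.range n, (proj (2 * π * k / n) +ᵥ A)


theorem liouville_part {X : Type*} [MeasurableSpace X] (μ : Measure X)
    (u : X → ℂ) (hu : Integrable u μ) (ρ : X → ℝ) (hρ : Measurable ρ) (M : ℝ)
    (hM : ∀ x, |ρ x| ≤ M) (c C : ℝ)
    (h : ∀ z : ℂ, 0 ≤ z.re → ‖∫ x, u x * Complex.exp (-z * ρ x) ∂μ‖ ≤ C * rexp (-(c * z.re))) :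
    ∫ x in {x | ρ x < c}, u x ∂μ = 0 := by
  set S : Set X := {x | ρ x < c} with hS
  have hSm : MeasurableSet S := measurableSet_lt hρ measurable_const
  set H : ℂ → ℂ := fun z => ∫ x in S, u x * Complex.exp (z * ((c - ρ x : ℝ) : ℂ)) ∂μ with hH
  have hmeas : ∀ z : ℂ, Measurable fun x => Complex.exp (z * ((c - ρ x : ℝ) : ℂ)) := by
    intro z; fun_prop
  have hnorm : ∀ (z : ℂ) x, ‖Complex.exp (z * ((c - ρ x : ℝ) : ℂ))‖ = rexp (z.re * (c - ρ x)) := by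
    intro z x
    rw [Complex.norm_exp, Complex.re_mul_ofReal]
  have hb : ∀ x, |c - ρ x| ≤ |c| + M := fun x => (abs_sub _ _).trans (by linarith [hM x])
  have hM0 : ∀ x : X, 0 ≤ |c| + M := fun x => (abs_nonneg _).trans (hb x)
  have hexpb : ∀ (z : ℂ) x, ‖Complex.exp (z * ((c - ρ x : ℝ) : ℂ))‖ ≤ rexp (‖z‖ * (|c| + M)) := by
    intro z x
    rw [hnorm]
    apply Real.exp_le_exp.2
    calc z.re * (c - ρ x) ≤ |z.re * (c - ρ x)| := le_abs_self _
      _ = |z.re| * |c - ρ x| := abs_mul _ _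
      _ ≤ ‖z‖ * (|c| + M) := by
        gcongr
        · exact Complex.abs_re_le_norm z
        · exact hb x
  have hint : ∀ z : ℂ, Integrable (fun x => u x * Complex.exp (z * ((c - ρ x : ℝ) : ℂ))) μ := by
    intro z
    exact hu.mul_bdd (c := rexp (‖z‖ * (|c| + M))) (hmeas z).aestronglyMeasurable
      (Filter.Eventually.of_forall (hexpb z))
  have hneg : ∀ z : ℂ, z.re ≤ 0 → ‖H z‖ ≤ ∫ x, ‖u x‖ ∂μ := by
    intro z hz
    calc ‖H z‖ ≤ ∫ x in S, ‖u x‖ ∂μ := by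
          refine norm_integral_le_of_norm_le hu.norm.integrableOn ?_
          refine (ae_restrict_iff' hSm).2 (Filter.Eventually.of_forall fun x hx => ?_)
          rw [norm_mul, hnorm]
          have : rexp (z.re * (c - ρ x)) ≤ 1 := by
            apply Real.exp_le_one_iff.2
            have : ρ x < c := hx
            nlinarith
          nlinarith [norm_nonneg (u x)]
      _ ≤ _ := setIntegral_le_integral hu.norm (Filter.Eventually.of_forall fun x => norm_nonneg _)
  have hpos : ∀ z : ℂ, 0 ≤ z.re → ‖H z‖ ≤ C + ∫ x, ‖u x‖ ∂μ := by
    intro z hz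
    have e1 : H z + ∫ x in Sᶜ, u x * Complex.exp (z * ((c - ρ x : ℝ) : ℂ)) ∂μ
        = Complex.exp (z * c) * ∫ x, u x * Complex.exp (-z * ρ x) ∂μ := by
      rw [hH]
      simp only
      rw [integral_add_compl hSm (hint z), ← integral_const_mul]
      congr 1
      ext x
      rw [show z * ((c - ρ x : ℝ) : ℂ) = z * c + -z * ρ x by push_cast; ring, Complex.exp_add]
      ring
    have e2 : ‖∫ x in Sᶜ, u x * Complex.exp (z * ((c - ρ x : ℝ) : ℂ)) ∂μ‖ ≤ ∫ x, ‖u x‖ ∂μ := by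
      calc _ ≤ ∫ x in Sᶜ, ‖u x‖ ∂μ := by
            refine norm_integral_le_of_norm_le hu.norm.integrableOn ?_
            refine (ae_restrict_iff' hSm.compl).2 (Filter.Eventually.of_forall fun x hx => ?_)
            rw [norm_mul, hnorm]
            have : rexp (z.re * (c - ρ x)) ≤ 1 := by
              apply Real.exp_le_one_iff.2
              have : ¬ ρ x < c := hx
              nlinarith
            nlinarith [norm_nonneg (u x)]
        _ ≤ _ := setIntegral_le_integral hu.norm (Filter.Eventually.of_forall fun x => norm_nonneg _)
    have e3 : ‖Complex.exp (z * c) * ∫ x, u x * Complex.exp (-z * ρ x) ∂μ‖ ≤ C := by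
      rw [norm_mul, Complex.norm_exp, Complex.re_mul_ofReal]
      calc _ ≤ rexp (z.re * c) * (C * rexp (-(c * z.re))) := by
            gcongr; exact h z hz
        _ = C * (rexp (z.re * c) * rexp (-(c * z.re))) := by ring
        _ = C := by rw [← Real.exp_add]; ring_nf; simp
    rw [eq_sub_of_add_eq e1]
    exact (norm_sub_le _ _).trans (add_le_add e3 e2)
  have hC : 0 ≤ C := by
    have := (norm_nonneg _).trans (h 0 (by simp))
    simpa using this
  have hbdd : Bornology.IsBounded (range H) := by
    refine isBounded_iff_forall_norm_le.2 ⟨C + ∫ x, ‖u x‖ ∂μ, ?_⟩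
    rintro _ ⟨z, rfl⟩
    rcases le_total z.re 0 with hz | hz
    · linarith [hneg z hz]
    · exact hpos z hz
  have hdiff : Differentiable ℂ H := by
    intro z₀
    have := hasDerivAt_integral_of_dominated_loc_of_deriv_le (μ := μ.restrict S) (𝕜 := ℂ)
      (F := fun z x => u x * Complex.exp (z * ((c - ρ x : ℝ) : ℂ)))
      (F' := fun z x => u x * (Complex.exp (z * ((c - ρ x : ℝ) : ℂ)) * ((c - ρ x : ℝ) : ℂ)))
      (x₀ := z₀) (s := Metric.ball z₀ 1)
      (bound := fun x => ‖u x‖ * (rexp ((‖z₀‖ + 1) * (|c| + M)) * (|c| + M)))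
      (Metric.ball_mem_nhds _ one_pos)
      (Filter.Eventually.of_forall fun z => (hint z).integrableOn.aestronglyMeasurable)
      (hint z₀).integrableOn
      ((hu.integrableOn.aestronglyMeasurable).mul
        (((hmeas z₀).mul (by fun_prop)).aestronglyMeasurable))
      (Filter.Eventually.of_forall fun x z hz => ?_)
      (hu.norm.integrableOn.mul_const _)
      (Filter.Eventually.of_forall fun x z hz => ?_)
    · exact this.2.differentiableAt
    · rw [norm_mul, norm_mul]
      gcongr
      · have hz' : ‖z‖ ≤ ‖z₀‖ + 1 := by
          have : ‖z - z₀‖ < 1 := by simpa [dist_eq_norm] using hz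
          have := norm_le_norm_add_norm_sub' z z₀
          linarith
        refine (hexpb z x).trans (Real.exp_le_exp.2 ?_)
        have := hM0 x
        gcongr
      · rw [Complex.norm_real]; exact hb x
    · apply HasDerivAt.const_mul
      exact (hasDerivAt_mul_const _).cexp
  have hconst : ∀ z w, H z = H w := hdiff.apply_eq_apply_of_bounded hbdd
  have hlim : Filter.Tendsto (fun k : ℕ => H (-(k : ℂ))) Filter.atTop (nhds (∫ x in S, (0 : ℂ) ∂μ)) := by
    refine tendsto_integral_of_dominated_convergence (fun x => ‖u x‖)
      (fun k => (hint _).integrableOn.aestronglyMeasurable) hu.norm.integrableOn ?_ ?_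
    · intro k
      refine (ae_restrict_iff' hSm).2 (Filter.Eventually.of_forall fun x hx => ?_)
      rw [norm_mul, hnorm]
      have : rexp ((-(k : ℂ)).re * (c - ρ x)) ≤ 1 := by
        apply Real.exp_le_one_iff.2
        have : ρ x < c := hx
        have : (0 : ℝ) ≤ k := k.cast_nonneg
        simp
        nlinarith
      nlinarith [norm_nonneg (u x)]
    · refine (ae_restrict_iff' hSm).2 (Filter.Eventually.of_forall fun x hx => ?_)
      have hx' : ρ x < c := hx
      rw [tendsto_zero_iff_norm_tendsto_zero]
      simp only [norm_mul, hnorm]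
      rw [← mul_zero ‖u x‖]
      apply Filter.Tendsto.const_mul
      apply Real.tendsto_exp_atBot.comp
      simp only [Complex.neg_re, Complex.natCast_re]
      apply Filter.Tendsto.atBot_mul_const (by linarith)
      exact Filter.tendsto_neg_atTop_atBot.comp tendsto_natCast_atTop_atTop
  have hH0 : H 0 = 0 := by
    have : Filter.Tendsto (fun k : ℕ => H (-(k : ℂ))) Filter.atTop (nhds (H 0)) := by
      simp only [hconst _ 0]; exact tendsto_const_nhds
    simpa using tendsto_nhds_unique this hlim
  simpa [hH] using hH0

theorem hpos_of {n : ℕ} (hn : 1 ≤ n) : (0 : ℝ) < 2 * π / n := by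
  have : (0 : ℝ) < n := by exact_mod_cast hn
  positivity

/-- The representative of `x` modulo `h` in `[α, α + h)`. -/
def rr {h : ℝ} (hh : 0 < h) (α : ℝ) (x : 𝕋) : ℝ :=
  toIcoMod hh α (AddCircle.measurableEquivIco (2 * π) 0 x : ℝ)

theorem measurable_rr {h : ℝ} (hh : 0 < h) (α : ℝ) : Measurable (rr hh α) := by
  have h1 : Measurable fun x : 𝕋 => (AddCircle.measurableEquivIco (2 * π) 0 x : ℝ) :=
    measurable_subtype_coe.comp (AddCircle.measurableEquivIco (2 * π) 0).measurable
  unfold rr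
  simp only [toIcoMod_eq_add_fract_mul]
  exact measurable_const.add ((((h1.sub_const α).div_const h).fract).mul_const h)

theorem rr_mem {h : ℝ} (hh : 0 < h) (α : ℝ) (x : 𝕋) : rr hh α x ∈ Ico α (α + h) :=
  toIcoMod_mem_Ico hh α _

theorem rr_coe {n : ℕ} (hn : 1 ≤ n) (α y : ℝ) :
    rr (hpos_of hn) α (y : 𝕋) = toIcoMod (hpos_of hn) α y := by
  have hn0 : (n : ℝ) ≠ 0 := by positivity
  have h1 : (AddCircle.measurableEquivIco (2 * π) 0 (y : 𝕋) : ℝ)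
      = toIcoMod (by positivity : 0 < 2 * π) 0 y := rfl
  unfold rr
  have h2 : toIcoMod (by positivity : 0 < 2 * π) 0 y
      = y - toIcoDiv (by positivity : 0 < 2 * π) 0 y • (2 * π) := rfl
  rw [h1, h2]
  have : toIcoDiv (by positivity : 0 < 2 * π) 0 y • (2 * π)
      = (toIcoDiv (by positivity : 0 < 2 * π) 0 y * n) • (2 * π / n) := by
    rw [zsmul_eq_mul, zsmul_eq_mul]; push_cast; field_simp
  rw [this, toIcoMod_sub_zsmul]

theorem rr_eq {n : ℕ} (hn : 1 ≤ n) (α r : ℝ) (z : ℤ) (hr : r ∈ Ico α (α + 2 * π / n)) :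
    rr (hpos_of hn) α ((r + z * (2 * π / n) : ℝ) : 𝕋) = r := by
  rw [rr_coe hn, toIcoMod_eq_iff]
  exact ⟨hr, z, by simp⟩

theorem exists_rep {n : ℕ} (hn : 1 ≤ n) (α : ℝ) (x : 𝕋) :
    ∃ z : ℤ, x = ((rr (hpos_of hn) α x + z * (2 * π / n) : ℝ) : 𝕋) := by
  induction x using QuotientAddGroup.induction_on with
  | H y =>
    refine ⟨toIcoDiv (hpos_of hn) α y, ?_⟩
    have := toIcoMod_add_toIcoDiv_zsmul (hpos_of hn) α y
    have h2 := rr_coe hn α y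
    change rr (hpos_of hn) α (QuotientAddGroup.mk y) = _ at h2
    rw [h2, ← zsmul_eq_mul, this]

theorem mem_Rn {n : ℕ} (hn : 1 ≤ n) {a c b : ℝ} (hac : a ≤ c) (hb : b < a + 2 * π / n) (x : 𝕋) :
    x ∈ Rn n (proj '' Icc c b) ↔ c ≤ rr (hpos_of hn) a x ∧ rr (hpos_of hn) a x ≤ b := by
  have hn0 : (n : ℝ) ≠ 0 := by positivity
  constructor
  · intro hx
    simp only [Rn, mem_iUnion] at hx
    obtain ⟨k, -, hx⟩ := hx
    obtain ⟨_, ⟨y, hy, rfl⟩, rfl⟩ := hx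
    have e : (proj (2 * π * k / n) +ᵥ proj y) = ((y + ((k : ℤ) : ℝ) * (2 * π / n) : ℝ) : 𝕋) := by
      rw [vadd_eq_add]
      unfold proj
      rw [← AddCircle.coe_add]
      congr 1
      push_cast
      ring
    simp only
    rw [e, rr_eq hn a y k ⟨hac.trans hy.1, hy.2.trans_lt hb⟩]
    exact hy
  · intro hx
    obtain ⟨z, hz⟩ := exists_rep hn a x
    simp only [Rn, mem_iUnion]
    have hnz : (n : ℤ) ≠ 0 := by positivity
    refine ⟨(z % n).toNat, ?_, ?_⟩
    · have := Int.emod_lt_of_pos z (show (0 : ℤ) < n by positivity)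
      have := Int.emod_nonneg z hnz
      simp; omega
    · refine ⟨proj (rr (hpos_of hn) a x), ⟨_, hx, rfl⟩, ?_⟩
      have h1 : (((z % n).toNat : ℕ) : ℝ) = ((z % n : ℤ) : ℝ) := by
        have := Int.toNat_of_nonneg (Int.emod_nonneg z hnz)
        exact_mod_cast congrArg (Int.cast : ℤ → ℝ) this
      have h2 : (z : ℝ) = ((z % n : ℤ) : ℝ) + n * ((z / n : ℤ) : ℝ) := by
        have := Int.emod_add_mul_ediv z n
        exact_mod_cast (congrArg (Int.cast : ℤ → ℝ) this).symm
      simp only [vadd_eq_add]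
      conv_rhs => rw [hz]
      rw [h1]
      unfold proj
      rw [← AddCircle.coe_add, h2]
      have : rr (hpos_of hn) a x + (((z % n : ℤ) : ℝ) + n * ((z / n : ℤ) : ℝ)) * (2 * π / n)
        = (2 * π * ((z % n : ℤ) : ℝ) / n + rr (hpos_of hn) a x) + (z / n : ℤ) • (2 * π) := by
        rw [zsmul_eq_mul]; field_simp; ring
      rw [this, AddCircle.coe_add _ _ ((z / n : ℤ) • (2 * π)), AddCircle.coe_zsmul, AddCircle.coe_period]
      simp

theorem rr_add {n : ℕ} (hn : 1 ≤ n) {a b a' b' : ℝ} (hb : b + b' < a + a' + 2 * π / n) (x y : 𝕋)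
    (hx : rr (hpos_of hn) a x ≤ b) (hy : rr (hpos_of hn) a' y ≤ b') :
    rr (hpos_of hn) (a + a') (x + y) = rr (hpos_of hn) a x + rr (hpos_of hn) a' y := by
  obtain ⟨z, hz⟩ := exists_rep hn a x
  obtain ⟨w, hw⟩ := exists_rep hn a' y
  have h1 := (rr_mem (hpos_of hn) a x).1
  have h2 := (rr_mem (hpos_of hn) a' y).1
  have := rr_eq hn (a + a') (rr (hpos_of hn) a x + rr (hpos_of hn) a' y) (z + w)
    ⟨by linarith, by linarith⟩
  rw [← this]
  congr 1
  conv_lhs => rw [hz, hw]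
  rw [← AddCircle.coe_add]
  congr 1
  push_cast; ring

theorem rr_shift {n : ℕ} (hn : 1 ≤ n) (a : ℝ) (x : 𝕋) (ε : ℝ) (hε : 0 ≤ ε)
    (h : rr (hpos_of hn) a x + ε < a + 2 * π / n) :
    rr (hpos_of hn) a (x + (ε : 𝕋)) = rr (hpos_of hn) a x + ε := by
  obtain ⟨z, hz⟩ := exists_rep hn a x
  have h1 := (rr_mem (hpos_of hn) a x).1
  rw [← rr_eq hn a (rr (hpos_of hn) a x + ε) z ⟨by linarith, h⟩]
  congr 1
  conv_lhs => rw [hz]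
  rw [← AddCircle.coe_add]
  congr 1
  ring

theorem isClosed_Rn (n : ℕ) (a b : ℝ) : IsClosed (Rn n (proj '' Icc a b)) := by
  unfold Rn
  have hc : Continuous proj := AddCircle.continuous_mk' _
  refine isClosed_biUnion_finset fun k _ => ?_
  exact ((isCompact_Icc.image hc).vadd _).isClosed

theorem zero_of_ae {f : 𝕋 → ℂ} (hf : Continuous f) (S : Set 𝕋)
    (hae : ∀ᵐ x : 𝕋, x ∈ S → f x = 0)
    (hS : ∀ x ∈ S, ∃ δ > 0, ∀ ε : ℝ, 0 < ε → ε < δ → x + (ε : 𝕋) ∈ S) :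
    ∀ x ∈ S, f x = 0 := by
  intro x hx
  by_contra hfx
  obtain ⟨δ, hδ, hS⟩ := hS x hx
  have hc : Continuous fun ε : ℝ => f (x + (ε : 𝕋)) :=
    hf.comp (continuous_const.add (AddCircle.continuous_mk' _))
  have hU : IsOpen {ε : ℝ | f (x + (ε : 𝕋)) ≠ 0} := isOpen_ne_fun hc continuous_const
  obtain ⟨η, hη, hball⟩ := Metric.isOpen_iff.1 hU 0 (by simpa using hfx)
  set V : Set 𝕋 := (fun y => x + y) '' ((fun ε : ℝ => (ε : 𝕋)) '' Ioo 0 (min δ η)) with hV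
  have hVo : IsOpen V := by
    apply (Homeomorph.addLeft x).isOpenMap
    exact QuotientAddGroup.isOpenMap_coe _ isOpen_Ioo
  have hVn : V.Nonempty := by
    apply Set.Nonempty.image
    apply Set.Nonempty.image
    exact nonempty_Ioo.2 (lt_min hδ hη)
  have hpos := hVo.measure_pos (volume : Measure 𝕋) hVn
  have : (volume : Measure 𝕋) V = 0 := by
    refine measure_mono_null ?_ (ae_iff.1 hae)
    rintro _ ⟨_, ⟨ε, hε, rfl⟩, rfl⟩
    simp only [mem_ofPred_eq, Classical.not_imp]
    refine ⟨hS ε hε.1 (hε.2.trans_le (min_le_left _ _)), ?_⟩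
    apply hball
    simp only [Metric.mem_ball, dist_zero_right, Real.norm_eq_abs, abs_of_pos hε.1]
    exact hε.2.trans_le (min_le_right _ _)
  exact hpos.ne' this

theorem ae_zero_of_fourier (g : 𝕋 → ℂ) (hg : Measurable g) (C : ℝ) (hC : ∀ x, ‖g x‖ ≤ C)
    (h : ∀ m : ℤ, ∫ x : 𝕋, fourier m x * g x = 0) : ∀ᵐ x : 𝕋, g x = 0 := by
  have hmem : MemLp g 2 (AddCircle.haarAddCircle (T := 2 * π)) :=
    MemLp.of_bound hg.aestronglyMeasurable C (Filter.Eventually.of_forall hC)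
  have hcoe := hmem.coeFn_toLp
  have hz : hmem.toLp g = 0 := by
    apply fourierBasis.repr.injective
    ext m
    rw [fourierBasis_repr, fourierCoeff_congr_ae hcoe]
    simp only [map_zero, lp.coeFn_zero, Pi.zero_apply]
    have := h (-m)
    rw [AddCircle.volume_eq_smul_haarAddCircle, integral_smul_measure] at this
    have hp : (ENNReal.ofReal (2 * π)).toReal ≠ 0 := by
      rw [ENNReal.toReal_ofReal (by positivity)]; positivity
    simpa [fourierCoeff] using (smul_eq_zero.1 this).resolve_left hp
  have h0 : g =ᵐ[AddCircle.haarAddCircle] 0 := by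
    rw [hz] at hcoe
    exact hcoe.symm.trans (Lp.coeFn_zero _ _ _)
  rw [AddCircle.volume_eq_smul_haarAddCircle]
  exact Measure.ae_smul_measure h0 _

theorem circConv_continuous {g f : 𝕋 → ℂ} (hg : Continuous g) (hf : Continuous f) :
    Continuous (circConv g f) := by
  have := continuous_parametric_integral_of_continuous (μ := (volume : Measure 𝕋))
    (f := fun x t : 𝕋 => g t * f (x - t)) (by fun_prop) isCompact_univ
  simp only [Measure.restrict_univ] at this
  exact this

theorem conv_transform {g f : 𝕋 → ℂ} (hg : Continuous g) (hf : Continuous f)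
    (Φ Φ1 Φ2 : 𝕋 → ℂ) (hΦ : Measurable Φ) (K : ℝ) (hK : ∀ x, ‖Φ x‖ ≤ K)
    (hmul : ∀ t s, g t ≠ 0 → f s ≠ 0 → Φ (s + t) = Φ1 t * Φ2 s) :
    ∫ x : 𝕋, circConv g f x * Φ x = (∫ t : 𝕋, g t * Φ1 t) * ∫ s : 𝕋, f s * Φ2 s := by
  obtain ⟨A, hA⟩ := isCompact_univ.exists_bound_of_continuousOn hg.continuousOn
  obtain ⟨B, hB⟩ := isCompact_univ.exists_bound_of_continuousOn hf.continuousOn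
  have hA0 : 0 ≤ A := (norm_nonneg _).trans (hA 0 (mem_univ _))
  have hB0 : 0 ≤ B := (norm_nonneg _).trans (hB 0 (mem_univ _))
  have hint : Integrable (Function.uncurry fun x t : 𝕋 => g t * f (x - t) * Φ x)
      ((volume : Measure 𝕋).prod (volume : Measure 𝕋)) := by
    refine Integrable.of_bound (C := A * B * K) ?_ (Filter.Eventually.of_forall ?_)
    · apply Measurable.aestronglyMeasurable
      have h1 : Measurable fun q : 𝕋 × 𝕋 => g q.2 * f (q.1 - q.2) := by
        apply Continuous.measurable; fun_prop
      exact h1.mul (hΦ.comp measurable_fst)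
    · rintro ⟨x, t⟩
      simp only [Function.uncurry, norm_mul]
      have h1 := hA t (mem_univ _)
      have h2 := hB (x - t) (mem_univ _)
      have h3 := hK x
      gcongr
  calc ∫ x : 𝕋, circConv g f x * Φ x = ∫ x : 𝕋, ∫ t : 𝕋, g t * f (x - t) * Φ x := by
        congr 1; ext x
        rw [circConv, integral_mul_const]
    _ = ∫ t : 𝕋, ∫ x : 𝕋, g t * f (x - t) * Φ x := integral_integral_swap hint
    _ = ∫ t : 𝕋, (g t * Φ1 t) * ∫ s : 𝕋, f s * Φ2 s := by
        congr 1; ext t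
        rw [← integral_add_right_eq_self _ t, ← integral_const_mul]
        congr 1; ext s
        rw [add_sub_cancel_right]
        by_cases h1 : g t = 0
        · simp [h1]
        by_cases h2 : f s = 0
        · simp [h2]
        rw [hmul t s h1 h2]; ring
    _ = _ := integral_mul_const _ _

theorem circConv_support {n : ℕ} (hn : 1 ≤ n) {g f : 𝕋 → ℂ}
    {a b a' b' : ℝ} (hb : b + b' < a + a' + 2 * π / n)
    (hg : ∀ x, g x ≠ 0 → rr (hpos_of hn) a x ≤ b)
    (hf : ∀ x, f x ≠ 0 → rr (hpos_of hn) a' x ≤ b') :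
    ∀ x, circConv g f x ≠ 0 → rr (hpos_of hn) (a + a') x ≤ b + b' := by
  intro x hx
  by_contra hcon
  apply hx
  unfold circConv
  rw [← integral_zero 𝕋 ℂ]
  congr 1; ext t
  by_contra hne
  have h1 := hg t (left_ne_zero_of_mul hne)
  have h2 := hf (x - t) (right_ne_zero_of_mul hne)
  have := rr_add hn hb t (x - t) h1 h2
  rw [add_sub_cancel] at this
  apply hcon; linarith

theorem exp_rr_bound {h : ℝ} (hh : 0 < h) (α : ℝ) (m : ℤ) (z : ℂ) (x : 𝕋) :
    ‖fourier m x * Complex.exp (-z * rr hh α x)‖ ≤ rexp (‖z‖ * (|α| + h)) := by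
  rw [norm_mul, Complex.norm_exp, Complex.re_mul_ofReal]
  have h1 : ‖fourier m x‖ = 1 := by rw [fourier_apply]; exact Circle.norm_coe _
  rw [h1, one_mul]
  apply Real.exp_le_exp.2
  obtain ⟨h2, h3⟩ := rr_mem hh α x
  have h4 : |rr hh α x| ≤ |α| + h := by
    rw [abs_le]; constructor
    · linarith [neg_abs_le α]
    · linarith [le_abs_self α]
  calc _ ≤ |(-z).re * rr hh α x| := le_abs_self _
    _ = |(-z).re| * |rr hh α x| := abs_mul _ _
    _ ≤ ‖z‖ * (|α| + h) := by
      gcongr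
      rw [← norm_neg z]; exact Complex.abs_re_le_norm _

theorem fourier_mul_add (m : ℤ) (x y : 𝕋) :
    fourier m (x + y) = fourier m x * fourier m y := by
  simp only [fourier_apply, smul_add, AddCircle.toCircle_add, Circle.coe_mul]

theorem integrable_of_cont {E : Type*} [NormedAddCommGroup E] {g : 𝕋 → E} (hg : Continuous g) :
    Integrable g (volume : Measure 𝕋) :=
  integrableOn_univ.1 (hg.continuousOn.integrableOn_compact isCompact_univ)

theorem pow_props {n : ℕ} (hn : 1 ≤ n) {f : 𝕋 → ℂ} (hf : Continuous f) {a b : ℝ} (hab : a ≤ b)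
    (hs : ∀ x, f x ≠ 0 → rr (hpos_of hn) a x ≤ b) (k : ℕ)
    (hk : ((k + 1 : ℕ) : ℝ) * (b - a) < 2 * π / n) :
    Continuous (circConvPow f k) ∧
    (∀ x, circConvPow f k x ≠ 0 →
      rr (hpos_of hn) (((k + 1 : ℕ) : ℝ) * a) x ≤ ((k + 1 : ℕ) : ℝ) * b) ∧
    ∀ (m : ℤ) (z : ℂ), ∫ x : 𝕋, circConvPow f k x *
        (fourier m x * Complex.exp (-z * rr (hpos_of hn) (((k + 1 : ℕ) : ℝ) * a) x))
      = (∫ x : 𝕋, f x * (fourier m x * Complex.exp (-z * rr (hpos_of hn) a x))) ^ (k + 1) := by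
  induction k with
  | zero => 
    refine ⟨hf, ?_, ?_⟩
    · simpa [circConvPow] using hs
    · simp [circConvPow]
  | succ k ih =>
    have hba : 0 ≤ b - a := by linarith
    obtain ⟨ih1, ih2, ih3⟩ := ih (by push_cast at hk ⊢; nlinarith)
    have ea : ((k + 1 + 1 : ℕ) : ℝ) * a = ((k + 1 : ℕ) : ℝ) * a + a := by push_cast; ring
    have eb : ((k + 1 + 1 : ℕ) : ℝ) * b = ((k + 1 : ℕ) : ℝ) * b + b := by push_cast; ring
    have hlt : ((k + 1 : ℕ) : ℝ) * b + b < ((k + 1 : ℕ) : ℝ) * a + a + 2 * π / n := by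
      rw [← ea, ← eb]; linarith
    rw [ea, eb]
    refine ⟨circConv_continuous ih1 hf, circConv_support hn hlt ih2 hs, fun m z => ?_⟩
    rw [pow_succ, ← ih3]
    refine conv_transform ih1 hf _ _ _ ?_ (rexp (‖z‖ * (|((k + 1 : ℕ) : ℝ) * a + a| + 2 * π / n)))
      (exp_rr_bound _ _ m z) ?_
    · have h1 : Measurable fun x : 𝕋 => fourier m x := (fourier m).continuous.measurable
      have h2 := measurable_rr (hpos_of hn) (((k + 1 : ℕ) : ℝ) * a + a)
      exact h1.mul (by fun_prop)
    · intro t s ht hs'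
      rw [add_comm s t, rr_add hn hlt t s (ih2 t ht) (hs s hs'), fourier_mul_add]
      push_cast
      rw [mul_add, Complex.exp_add]
      ring

theorem vanish {n : ℕ} {f : 𝕋 → ℂ} (hf : Continuous f) (k : ℕ) (F : 𝕋 → ℂ) (hF : Continuous F)
    (ρ ρ' : 𝕋 → ℝ) (hρ : Measurable ρ) (M : ℝ) (hM : ∀ x, |ρ x| ≤ M) (c : ℝ)
    (hc : ∀ x, F x ≠ 0 → ((k + 1 : ℕ) : ℝ) * c ≤ ρ' x)
    (hT : ∀ (m : ℤ) (z : ℂ), ∫ x : 𝕋, F x * (fourier m x * Complex.exp (-z * ρ' x))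
      = (∫ x : 𝕋, f x * (fourier m x * Complex.exp (-z * ρ x))) ^ (k + 1))
    (hS : ∀ x, ρ x < c → ∃ δ > 0, ∀ ε : ℝ, 0 < ε → ε < δ → ρ (x + (ε : 𝕋)) < c) :
    ∀ x, ρ x < c → f x = 0 := by
  have hSm : MeasurableSet {x | ρ x < c} := measurableSet_lt hρ measurable_const
  obtain ⟨B, hB⟩ := isCompact_univ.exists_bound_of_continuousOn hf.continuousOn
  have hFi : Integrable (fun x => ‖F x‖) (volume : Measure 𝕋) :=
    integrable_of_cont hF.norm
  refine zero_of_ae hf {x | ρ x < c} ?_ hS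
  have key : ∀ᵐ x : 𝕋, ({x | ρ x < c}.indicator f) x = 0 := by
    refine ae_zero_of_fourier _ (hf.measurable.indicator hSm) B
      (fun x => (norm_indicator_le_norm_self _ _).trans (hB x (mem_univ _))) fun m => ?_
    have hcont : Continuous fun x : 𝕋 => f x * fourier m x := hf.mul (fourier m).continuous
    have := liouville_part (volume : Measure 𝕋) (fun x => f x * fourier m x)
      (integrable_of_cont hcont)
      ρ hρ M hM c (max 1 (∫ x : 𝕋, ‖F x‖)) ?_
    · rw [← integral_indicator hSm] at this
      rw [← this]
      congr 1; ext x
      by_cases hx : ρ x < c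
      · simp [indicator, hx, mul_comm]
      · simp [indicator, hx]
    · intro z hz
      have h1 : ‖∫ x : 𝕋, F x * (fourier m x * Complex.exp (-z * ρ' x))‖
          ≤ (∫ x : 𝕋, ‖F x‖) * rexp (-(((k + 1 : ℕ) : ℝ) * c * z.re)) := by
        rw [← integral_mul_const]
        refine norm_integral_le_of_norm_le (hFi.mul_const _) (Filter.Eventually.of_forall ?_)
        intro x
        by_cases hx : F x = 0
        · simp [hx]
        have h2 := hc x hx
        have h1 : ‖fourier m x‖ = 1 := by rw [fourier_apply]; exact Circle.norm_coe _
        rw [norm_mul, norm_mul, h1, one_mul, Complex.norm_exp, Complex.re_mul_ofReal]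
        gcongr
        rw [Complex.neg_re]
        nlinarith
      rw [hT, norm_pow] at h1
      simp only [mul_assoc] at h1 ⊢
      refine le_of_pow_le_pow_left₀ (Nat.succ_ne_zero k) (by positivity) (h1.trans ?_)
      rw [mul_pow, ← Real.exp_nat_mul]
      have h3 : ∫ x : 𝕋, ‖F x‖ ≤ max 1 (∫ x : 𝕋, ‖F x‖) ^ (k + 1) :=
        (le_max_right _ _).trans (le_self_pow₀ (le_max_left _ _) (Nat.succ_ne_zero k))
      rw [mul_neg]
      gcongr
  filter_upwards [key] with x hx hxS
  rwa [indicator_of_mem (show x ∈ {x | ρ x < c} from hxS)] at hx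

/-- Titchmarsh theorem for powers of a distribution on a circle
(continuous-function version). -/
theorem titchmarsh_powers (n p : ℕ) (hn : 1 ≤ n) (hp : 1 ≤ p)
    (f : 𝕋 → ℂ) (hf : Continuous f)
    (a b : ℝ) (hab : a ≤ b) (hlen : b - a < 2 * π / (p * n))
    (hs : tsupport f ⊆ Rn n (proj '' Icc a b))
    (hmin : ∀ a' b' : ℝ, a ≤ a' → b' ≤ b → (a', b') ≠ (a, b) →
      ¬ tsupport f ⊆ Rn n (proj '' Icc a' b')) :
    tsupport (circConvPow f (p - 1)) ⊆ Rn n (proj '' Icc (p * a) (p * b)) ∧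
    ∀ a' b' : ℝ, (p : ℝ) * a ≤ a' → b' ≤ (p : ℝ) * b → (a', b') ≠ ((p : ℝ) * a, (p : ℝ) * b) →
      ¬ tsupport (circConvPow f (p - 1)) ⊆ Rn n (proj '' Icc a' b') := by
  obtain ⟨k, rfl⟩ : ∃ k, p = k + 1 := ⟨p - 1, by omega⟩
  rw [Nat.add_sub_cancel]
  have hp0 : (1 : ℝ) ≤ ((k + 1 : ℕ) : ℝ) := by exact_mod_cast hp
  have hp1 : (0 : ℝ) < ((k + 1 : ℕ) : ℝ) := by linarith
  have hn1 : (0 : ℝ) < n := by exact_mod_cast hn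
  set P : ℝ := ((k + 1 : ℕ) : ℝ) with hP
  have hk : P * (b - a) < 2 * π / n := by
    rw [lt_div_iff₀ (by positivity)] at hlen ⊢
    linarith
  have hba : b < a + 2 * π / n := by nlinarith
  have hPb : P * b < P * a + 2 * π / n := by linarith
  have hsupp : ∀ x, f x ≠ 0 → rr (hpos_of hn) a x ≤ b := fun x hx =>
    ((mem_Rn hn le_rfl hba x).1 (hs (subset_tsupport f hx))).2
  obtain ⟨hFc, hFs, hFT⟩ := pow_props hn hf hab hsupp k hk
  rw [← hP] at hFs hFT
  have hrb : ∀ x, |rr (hpos_of hn) a x| ≤ |a| + 2 * π / n := by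
    intro x
    obtain ⟨h2, h3⟩ := rr_mem (hpos_of hn) a x
    rw [abs_le]; constructor
    · linarith [neg_abs_le a, hpos_of hn]
    · linarith [le_abs_self a]
  refine ⟨closure_minimal (fun x hx => (mem_Rn hn le_rfl hPb x).2
    ⟨(rr_mem _ _ x).1, hFs x hx⟩) (isClosed_Rn _ _ _), ?_⟩
  intro a' b' ha' hb' hne hsub
  have hsub' : ∀ x, circConvPow f k x ≠ 0 →
      a' ≤ rr (hpos_of hn) (P * a) x ∧ rr (hpos_of hn) (P * a) x ≤ b' := fun x hx =>
    (mem_Rn hn ha' (by linarith) x).1 (hsub (subset_tsupport _ hx))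
  by_cases h1 : a' = P * a
  · have hb2 : b' < P * b := lt_of_le_of_ne hb' fun h => hne (by rw [h1, h])
    have hd : P * (b' / P) = b' := by field_simp
    have hdb : b' / P < b := by rw [div_lt_iff₀ hp1]; linarith
    have := vanish (n := n) hf k (circConvPow f k) hFc (fun x => -rr (hpos_of hn) a x)
      (fun x => -rr (hpos_of hn) (P * a) x) (measurable_rr _ _).neg _
      (fun x => by rw [abs_neg]; exact hrb x) (-(b' / P)) ?_ ?_ ?_
    · refine hmin a (b' / P) le_rfl hdb.le (fun h => hdb.ne (Prod.ext_iff.1 h).2) ?_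
      refine closure_minimal (fun x hx => ?_) (isClosed_Rn _ _ _)
      refine (mem_Rn hn le_rfl (by linarith) x).2 ⟨(rr_mem _ _ x).1, ?_⟩
      by_contra hcon
      exact hx (this x (by linarith))
    · intro x hx
      rw [← hP, mul_neg, hd]
      linarith [(hsub' x hx).2]
    · intro m z
      have := hFT m (-z)
      simpa using this
    · intro x hx
      refine ⟨a + 2 * π / n - rr (hpos_of hn) a x, by linarith [(rr_mem (hpos_of hn) a x).2], ?_⟩
      intro ε h0 h1
      rw [rr_shift hn a x ε h0.le (by linarith)]
      linarith
  · have ha2 : P * a < a' := lt_of_le_of_ne ha' (Ne.symm h1)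
    have hd : P * (a' / P) = a' := by field_simp
    have hda : a < a' / P := by rw [lt_div_iff₀ hp1]; linarith
    have := vanish (n := n) hf k (circConvPow f k) hFc (rr (hpos_of hn) a)
      (rr (hpos_of hn) (P * a)) (measurable_rr _ _) _ hrb (a' / P) ?_ hFT ?_
    · refine hmin (a' / P) b hda.le le_rfl (fun h => hda.ne' (Prod.ext_iff.1 h).1) ?_
      refine closure_minimal (fun x hx => ?_) (isClosed_Rn _ _ _)
      refine (mem_Rn hn hda.le hba x).2 ⟨?_, hsupp x hx⟩
      by_contra hcon
      exact hx (this x (by linarith))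
    · intro x hx
      rw [← hP, hd]
      exact (hsub' x hx).1
    · intro x hx
      refine ⟨min (a + 2 * π / n - rr (hpos_of hn) a x) (a' / P - rr (hpos_of hn) a x),
        lt_min (by linarith [(rr_mem (hpos_of hn) a x).2]) (by linarith), ?_⟩
      intro ε h0 h1
      have h2 := h1.trans_le (min_le_left _ _)
      have h3 := h1.trans_le (min_le_right _ _)
      rw [rr_shift hn a x ε h0.le (by linarith)]
      linarith

end
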